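/- arXiv:1703.06624 — 2 statements merged into one kernel-verified Lean document; each statement's English description precedes it below -/
import Mathlib

section
/- Let a > 0 and n, m ∈ ℕ. Then (2a²/π)·∫_{−1}^{1} Ch_n(λ;a)·Ch_m(λ;a)·√(1 − λ²)/(a⁴ − 4(a² − 1)λ²) dλ = δ_{n,m} − I_a(n,m), where δ_{n,m} is the Kronecker delta, I_a(n,m) = 0 if a ≤ √2, and, if a > √2, I_a(n,m) = ((a² − 2)/(2(a² − 1)))·(Ch_n(λ₊;a)·Ch_m(λ₊;a) + Ch_n(λ₋;a)·Ch_m(λ₋;a)) with λ_± = ±a²/(2√(a² − 1)). -/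
/-- The generalized Chebyshev polynomials `Ch_n(x; a)`:
`Ch_0 = 1`, `Ch_1 = 2x/a`, `Ch_2 = 2x·Ch_1 − a`, and
`Ch_{n+1} = 2x·Ch_n − Ch_{n−1}` for `n ≥ 2`. -/
noncomputable def Ch (a x : ℝ) : ℕ → ℝ
  | 0 => 1
  | 1 => 2 * x / a
  | 2 => 2 * x * (2 * x / a) - a
  | n + 3 => 2 * x * Ch a x (n + 2) - Ch a x (n + 1)

/-!
Put `c = a² - 1`, let `D = (1 + c)² - 4cX²` be the denominator of the weight and
`V_k = U_k - c U_{k-2}`, so that `a · Ch_n = V_n` for `n ≥ 1`. Two identities drive the proof: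
`D U_k = V_k - c V_{k+2}` and `V_n V_m = (1 + c) V_{n+m} + D U_{n-1} U_{m-1}`.
Let `L` be a functional with `L 1 = 1` and `L X = 0` such that `p ↦ L (D p)` integrates `p` against
`(2(1 + c)/π) √(1 - x²)`. The first identity forces `L V_k = 0` for `k ≥ 1`, and the second then
reduces the orthogonality of the `V_n` to that of the `U_n`.
Only the total mass of the weight remains to be computed. It is `1` for `|c| ≤ 1`, and the
symmetry `c ↦ c⁻¹` turns this into `c⁻¹` for `|c| > 1`. When `c > 1` the missing mass sits at the
two zeros of `D`, which do not affect `L (D p)`.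
-/

open Polynomial MeasureTheory Filter Topology
open Polynomial.Chebyshev hiding C

namespace BernsteinSzego

section Recurrence

theorem eq_of_recurrence {A : Type*} [Ring A] {t : A} {f g : ℤ → A}
    (hf : ∀ k, f (k + 2) = t * f (k + 1) - f k) (hg : ∀ k, g (k + 2) = t * g (k + 1) - g k)
    (h_zero : f 0 = g 0) (h_one : f 1 = g 1) (k : ℤ) : f k = g k := by
  induction k using Polynomial.Chebyshev.induct with
  | zero => exact h_zero
  | one => exact h_one
  | add_two n ih_succ ih => rw [hf, hg, ih_succ, ih]
  | neg_add_one n ih ih_succ =>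
    have hf' := hf (-n - 1)
    have hg' := hg (-n - 1)
    rw [show -(n : ℤ) - 1 + 2 = -n + 1 by ring, sub_add_cancel] at hf' hg'
    rw [eq_sub_iff_add_eq', ← eq_sub_iff_add_eq] at hf' hg'
    rw [hf', hg', ih, ih_succ]

end Recurrence

section Polynomials

variable {R : Type*} [CommRing R] (c : R)

/-- The denominator `D = (1 + c)² - 4cX²` of the Bernstein–Szegő weight, as a polynomial. For
`c = a² - 1` it is the denominator `a⁴ - 4(a² - 1)X²` of the spectral density. -/
noncomputable def denom : R[X] := (1 + C c) ^ 2 - 4 * C c * X ^ 2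

/-- The Bernstein–Szegő polynomials `V_k = U_k - c U_{k-2}`, orthogonal with respect to
`√(1 - x²) / D(x)` up to point masses at the zeros of `D`. The index is an integer, as for
`Polynomial.Chebyshev.U`. -/
noncomputable def poly (k : ℤ) : R[X] := U R k - C c * U R (k - 2)

theorem eval_denom (x : R) : (denom c).eval x = (1 + c) ^ 2 - 4 * c * x ^ 2 := by
  simp [denom]

theorem poly_zero : poly c 0 = 1 + C c := by
  simp [poly]

theorem poly_one : poly c 1 = 2 * X := by
  simp [poly]

theorem poly_two : poly c 2 = 4 * X ^ 2 - (1 + C c) := by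
  simp only [poly, U_two, sub_self, U_zero]
  ring

theorem poly_add_two (k : ℤ) : poly c (k + 2) = 2 * X * poly c (k + 1) - poly c k := by
  have h := U_eq R k
  rw [poly, poly, poly, U_add_two, add_sub_cancel_right, show k + 1 - 2 = k - 1 by ring]
  linear_combination (-C c) * h

theorem denom_mul_U (k : ℤ) : denom c * U R k = poly c k - C c * poly c (k + 2) := by
  have h_add_two := U_add_two R k
  have h_add_one := U_add_one R k
  have h_self := U_eq R k
  rw [denom, poly, poly, add_sub_cancel_right]
  linear_combination C c * h_add_two + 2 * X * C c * h_add_one + C c * h_self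

theorem poly_one_mul_poly (m : ℤ) :
    poly c 1 * poly c m = (1 + C c) * poly c (m + 1) + denom c * U R (m - 1) := by
  have h := poly_add_two c (m - 1)
  rw [denom_mul_U, poly_one]
  ring_nf at h ⊢
  linear_combination -h

theorem poly_mul_poly (n m : ℤ) :
    poly c n * poly c m = (1 + C c) * poly c (n + m) + denom c * (U R (n - 1) * U R (m - 1)) := by
  refine eq_of_recurrence (t := 2 * X) (f := fun n ↦ poly c n * poly c m)
    (g := fun n ↦ (1 + C c) * poly c (n + m) + denom c * (U R (n - 1) * U R (m - 1)))
    (fun k ↦ ?_) (fun k ↦ ?_) (by simp [poly_zero])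
    (by simpa [add_comm] using poly_one_mul_poly c m) n
  · simp only [poly_add_two]
    ring
  · simp only [add_right_comm k _ m, add_sub_right_comm k _ 1, poly_add_two, U_add_two]
    ring

end Polynomials

section Functional

variable {R : Type*} [CommRing R] {c : R} {L : R[X] →ₗ[R] R}

theorem map_poly_of_map_denom_mul_U_mul_U
    (hL : ∀ n m : ℕ, L (denom c * (U R n * U R m)) = if n = m then 1 + c else 0) (k : ℕ) :
    L (poly c k) = c * L (poly c (k + 2 : ℕ)) + if k = 0 then 1 + c else 0 := by
  have h := hL k 0
  rw [Nat.cast_zero, U_zero, mul_one, denom_mul_U, ← smul_eq_C_mul, map_sub, map_smul,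
    smul_eq_mul] at h
  push_cast
  linear_combination h

/-- A linear functional on polynomials that behaves like integration against the spectral measure:
it is normalized and centred, and multiplying by the denominator `D` turns it into `1 + c` times
the functional for which the Chebyshev polynomials `U_n` are orthonormal. -/
structure IsSpectral (c : R) (L : R[X] →ₗ[R] R) : Prop where
  map_one : L 1 = 1
  map_X : L X = 0
  map_denom_mul_U_mul_U (n m : ℕ) :
    L (denom c * (U R n * U R m)) = if n = m then 1 + c else 0

theorem IsSpectral.map_poly_succ [NoZeroDivisors R] (hL : IsSpectral c L) (k : ℕ) :
    L (poly c (k + 1 : ℕ)) = 0 := by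
  have h_rec := map_poly_of_map_denom_mul_U_mul_U hL.map_denom_mul_U_mul_U
  rcases eq_or_ne c 0 with rfl | hc
  · simpa using h_rec (k + 1)
  induction k using Nat.twoStepInduction with
  | zero =>
    rw [zero_add, Nat.cast_one, poly_one, ← map_ofNat C, ← smul_eq_C_mul, map_smul, hL.map_X,
      smul_zero]
  | one =>
    have h := h_rec 0
    rw [Nat.cast_zero, poly_zero, map_add, ← mul_one (C c), ← smul_eq_C_mul, map_smul,
      hL.map_one] at h
    simpa [hc] using h
  | more k ih _ =>
    have h := h_rec (k + 1)
    rw [ih, if_neg k.succ_ne_zero, add_zero] at h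
    exact (mul_eq_zero.mp h.symm).resolve_left hc

theorem IsSpectral.map_poly_mul_poly [NoZeroDivisors R] (hL : IsSpectral c L) (n m : ℕ) :
    L (poly c (n + 1 : ℕ) * poly c (m + 1 : ℕ)) = if n = m then 1 + c else 0 := by
  have h : (1 + C c) * poly c ((n + 1 : ℕ) + (m + 1 : ℕ)) =
      (1 + c) • poly c (n + 1 + m + 1 : ℕ) := by
    rw [smul_eq_C_mul]
    simp [add_assoc]
  rw [poly_mul_poly, map_add, h, map_smul, hL.map_poly_succ, smul_zero, zero_add]
  simpa using hL.map_denom_mul_U_mul_U n m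

end Functional

section Weight

variable {c x : ℝ}

/-- The Bernstein–Szegő weight `√(1 - x²) / D(x)`. -/
noncomputable def weight (c x : ℝ) : ℝ := √(1 - x ^ 2) / (denom c).eval x

theorem sq_one_sub_abs_le_eval_denom (hx : x ∈ Set.Icc (-1 : ℝ) 1) :
    (1 - |c|) ^ 2 ≤ (denom c).eval x := by
  have hx' : x ^ 2 ≤ 1 := by nlinarith [hx.1, hx.2]
  rw [eval_denom]
  rcases abs_cases c with ⟨h, hc⟩ | ⟨h, hc⟩ <;> rw [h] <;> nlinarith [sq_nonneg x]

theorem eval_denom_mul_weight (hc : c ≠ -1) (hx : x ∈ Set.Icc (-1 : ℝ) 1) :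
    (denom c).eval x * weight c x = √(1 - x ^ 2) := by
  rcases eq_or_ne ((denom c).eval x) 0 with h | h
  · have habs : |c| = 1 := by nlinarith [sq_one_sub_abs_le_eval_denom (c := c) hx]
    obtain rfl : c = 1 := ((abs_eq zero_le_one).mp habs).resolve_right hc
    rw [eval_denom] at h
    rw [eval_denom, h, zero_mul, show 1 - x ^ 2 = 0 by linarith, Real.sqrt_zero]
  · exact mul_div_cancel₀ _ h

theorem weight_one (x : ℝ) : weight 1 x = 1 / 4 * √(1 - x ^ 2)⁻¹ := by
  rw [weight, eval_denom, Real.sqrt_inv, ← Real.sqrt_div_self,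
    show (1 + 1 : ℝ) ^ 2 - 4 * 1 * x ^ 2 = 4 * (1 - x ^ 2) by ring, div_mul_div_comm, one_mul]

theorem weight_inv (hc : c ≠ 0) (x : ℝ) : weight c⁻¹ x = c ^ 2 * weight c x := by
  rw [weight, weight, show (denom c⁻¹).eval x = (denom c).eval x / c ^ 2 by
    rw [eval_denom, eval_denom]; field_simp; ring, div_div_eq_mul_div]
  ring

theorem intervalIntegrable_weight (hc : c ≠ -1) :
    IntervalIntegrable (weight c) volume (-1) 1 := by
  rcases eq_or_ne c 1 with rfl | hc1
  · simpa only [funext weight_one] using intervalIntegrable_sqrt_one_sub_sq_inv.const_mul (1 / 4)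
  · have habs : 1 - |c| ≠ 0 := fun h ↦ by
      rcases eq_or_eq_neg_of_abs_eq (sub_eq_zero.mp h).symm with h | h
      exacts [hc1 h, hc h]
    refine ContinuousOn.intervalIntegrable_of_Icc (by norm_num) ?_
    refine ContinuousOn.div (by fun_prop) (denom c).continuous.continuousOn fun x hx ↦ ?_
    exact ((by positivity : 0 < (1 - |c|) ^ 2).trans_le (sq_one_sub_abs_le_eval_denom hx)).ne'

theorem intervalIntegrable_eval_mul_weight (hc : c ≠ -1) (p : ℝ[X]) :
    IntervalIntegrable (fun x ↦ p.eval x * weight c x) volume (-1) 1 :=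
  (intervalIntegrable_weight hc).continuousOn_mul p.continuous.continuousOn

end Weight

section ChebyshevU

theorem two_mul_one_sub_X_sq_mul_U_mul_U (R : Type*) [CommRing R] (n m : ℤ) :
    2 * (1 - X ^ 2) * (U R n * U R m) = T R (n - m) - T R (n + m + 2) := by
  refine eq_of_recurrence (t := 2 * X) (f := fun m ↦ 2 * (1 - X ^ 2) * (U R n * U R m))
    (g := fun m ↦ T R (n - m) - T R (n + m + 2)) (fun k ↦ ?_) (fun k ↦ ?_) ?_ ?_ m
  · simp only [U_add_two]
    ring
  · have h_sub := T_eq R (n - k)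
    have h_add := T_add_two R (n + k + 2)
    ring_nf at h_sub h_add ⊢
    linear_combination h_sub - h_add
  · have h_U := one_sub_X_sq_mul_U_eq_pol_in_T R n
    have h_T := T_add_two R n
    simp only [U_zero, sub_zero, add_zero]
    linear_combination 2 * h_U - h_T
  · have h_U := one_sub_X_sq_mul_U_eq_pol_in_T R n
    have h_T := T_add_two R n
    have h_sub := T_sub_one R n
    have h_add := T_add_two R (n + 1)
    rw [add_assoc n 1 1, one_add_one_eq_two, add_right_comm n 1 2] at h_add
    rw [add_right_comm n 1 2]
    simp only [U_one, h_sub, h_add]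
    linear_combination 4 * X * h_U - 2 * X * h_T

theorem integral_eval_U_mul_U_mul_sqrt (n m : ℕ) :
    ∫ x in (-1 : ℝ)..1, (U ℝ n * U ℝ m).eval x * √(1 - x ^ 2) =
      if n = m then Real.pi / 2 else 0 := by
  have h_weight (x : ℝ) : (U ℝ n * U ℝ m).eval x * √(1 - x ^ 2) =
      ((T ℝ (n - m)).eval x - (T ℝ (n + m + 2)).eval x) / 2 * √(1 - x ^ 2)⁻¹ := by
    have h := congrArg (eval x) (two_mul_one_sub_X_sq_mul_U_mul_U ℝ n m)
    simp only [eval_mul, eval_sub, eval_one, eval_pow, eval_X, eval_ofNat] at h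
    rw [← h, eval_mul, Real.sqrt_inv]
    nth_rw 1 [← Real.div_sqrt]
    ring
  simp only [h_weight]
  rw [← integral_measureT fun x ↦ ((T ℝ (n - m)).eval x - (T ℝ (n + m + 2)).eval x) / 2,
    integral_div, integral_sub (integrable_measureT (by fun_prop))
      (integrable_measureT (by fun_prop)),
    integral_eval_T_real_measureT_of_ne_zero (by lia : (n + m + 2 : ℤ) ≠ 0), sub_zero]
  split_ifs with h
  · rw [h, sub_self, integral_eval_T_real_measureT_zero]
  · rw [integral_eval_T_real_measureT_of_ne_zero (sub_ne_zero.mpr (mod_cast h)), zero_div]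

theorem abs_eval_U_mul_sqrt_le_one (k : ℤ) {x : ℝ} (hx : x ∈ Set.Icc (-1 : ℝ) 1) :
    |(U ℝ k).eval x * √(1 - x ^ 2)| ≤ 1 := by
  have h := U_real_cos (Real.arccos x) k
  rw [Real.cos_arccos hx.1 hx.2, Real.sin_arccos] at h
  rw [h]
  exact Real.abs_sin_le_one _

end ChebyshevU

section Integral

variable {c : ℝ}

/-- Integration of polynomials against the absolutely continuous part
`(2(1 + c)/π) √(1 - x²) / D(x) dx` of the spectral measure, as a linear functional. The value
`c = -1` is excluded, since there the weight has a non-integrable singularity at `0`. -/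
noncomputable def acFunctional (hc : c ≠ -1) : ℝ[X] →ₗ[ℝ] ℝ where
  toFun p := 2 * (1 + c) / Real.pi * ∫ x in (-1 : ℝ)..1, p.eval x * weight c x
  map_add' p q := by
    simp only [eval_add, add_mul]
    rw [intervalIntegral.integral_add (intervalIntegrable_eval_mul_weight hc p)
      (intervalIntegrable_eval_mul_weight hc q), mul_add]
  map_smul' r p := by
    simp only [eval_smul, smul_eq_mul, mul_assoc, intervalIntegral.integral_const_mul,
      RingHom.id_apply]
    ring

theorem acFunctional_apply (hc : c ≠ -1) (p : ℝ[X]) :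
    acFunctional hc p = 2 * (1 + c) / Real.pi * ∫ x in (-1 : ℝ)..1, p.eval x * weight c x :=
  rfl

theorem acFunctional_X (hc : c ≠ -1) : acFunctional hc X = 0 := by
  have h := intervalIntegral.integral_comp_neg (a := -1) (b := 1) fun x ↦ x * weight c x
  simp only [weight, eval_denom, neg_sq, neg_neg, neg_mul, intervalIntegral.integral_neg] at h
  simp only [acFunctional_apply, eval_X, weight, eval_denom]
  rw [self_eq_neg.mp h.symm, mul_zero]

theorem acFunctional_denom_mul_U_mul_U (hc : c ≠ -1) (n m : ℕ) :
    acFunctional hc (denom c * (U ℝ n * U ℝ m)) = if n = m then 1 + c else 0 := by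
  have h : ∫ x in (-1 : ℝ)..1, (denom c * (U ℝ n * U ℝ m)).eval x * weight c x =
      ∫ x in (-1 : ℝ)..1, (U ℝ n * U ℝ m).eval x * √(1 - x ^ 2) := by
    refine intervalIntegral.integral_congr fun x hx ↦ ?_
    rw [Set.uIcc_of_le (by norm_num)] at hx
    simp only [← eval_denom_mul_weight hc hx, eval_mul]
    ring
  rw [acFunctional_apply, h, integral_eval_U_mul_U_mul_sqrt]
  split_ifs
  · field_simp
  · exact mul_zero _

end Integral

section TotalMass

variable {c : ℝ}

theorem abs_eval_poly_mul_weight_le (hc : |c| < 1) (k : ℤ) {x : ℝ}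
    (hx : x ∈ Set.Icc (-1 : ℝ) 1) : |(poly c k).eval x * weight c x| ≤ 2 / (1 - |c|) ^ 2 := by
  have hpos : 0 < (1 - |c|) ^ 2 := pow_pos (sub_pos.mpr hc) 2
  have hdenom := sq_one_sub_abs_le_eval_denom (c := c) hx
  have hnum : |(poly c k).eval x * √(1 - x ^ 2)| ≤ 2 := calc
    _ = |(U ℝ k).eval x * √(1 - x ^ 2) - c * ((U ℝ (k - 2)).eval x * √(1 - x ^ 2))| := by
      simp only [poly, eval_sub, eval_mul, eval_C]
      ring_nf
    _ ≤ |(U ℝ k).eval x * √(1 - x ^ 2)| + |c| * |(U ℝ (k - 2)).eval x * √(1 - x ^ 2)| := by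
      rw [← abs_mul]
      exact abs_sub _ _
    _ ≤ 1 + 1 * 1 := by
      gcongr <;> exact abs_eval_U_mul_sqrt_le_one _ hx
    _ = 2 := by norm_num
  rw [weight, ← mul_div_assoc, abs_div, abs_of_pos (hpos.trans_le hdenom)]
  gcongr

theorem exists_abs_acFunctional_poly_le (hc : c ≠ -1) (hc1 : |c| < 1) :
    ∃ B, ∀ k : ℤ, |acFunctional hc (poly c k)| ≤ B := by
  refine ⟨|2 * (1 + c) / Real.pi| * (2 / (1 - |c|) ^ 2 * |1 - (-1)|), fun k ↦ ?_⟩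
  rw [acFunctional_apply, abs_mul]
  gcongr
  refine intervalIntegral.norm_integral_le_of_norm_le_const
    (f := fun x ↦ (poly c k).eval x * weight c x) fun x hx ↦ ?_
  rw [Set.uIoc_of_le (by norm_num)] at hx
  exact abs_eval_poly_mul_weight_le hc1 k (Set.Ioc_subset_Icc_self hx)

theorem acFunctional_poly_succ_of_abs_lt_one (hc : c ≠ -1) (hc1 : |c| < 1) (k : ℕ) :
    acFunctional hc (poly c (k + 1 : ℕ)) = 0 := by
  have h_rec := map_poly_of_map_denom_mul_U_mul_U (acFunctional_denom_mul_U_mul_U hc)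
  have h_iter (j : ℕ) : acFunctional hc (poly c (k + 1 : ℕ)) =
      c ^ j * acFunctional hc (poly c (k + 2 * j + 1 : ℕ)) := by
    induction j with
    | zero => simp
    | succ j ih =>
      rw [ih, h_rec, if_neg (Nat.succ_ne_zero _), pow_succ]
      ring_nf
  obtain ⟨B, hB⟩ := exists_abs_acFunctional_poly_le hc hc1
  have h_lim : Tendsto (fun j : ℕ ↦ c ^ j * acFunctional hc (poly c (k + 2 * j + 1 : ℕ)))
      atTop (𝓝 0) :=
    (tendsto_pow_atTop_nhds_zero_of_abs_lt_one hc1).zero_mul_isBoundedUnder_le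
      (isBoundedUnder_of ⟨B, fun j ↦ hB _⟩)
  exact tendsto_nhds_unique (tendsto_const_nhds.congr h_iter) h_lim

theorem acFunctional_one_of_abs_lt_one (hc : c ≠ -1) (hc1 : |c| < 1) :
    acFunctional hc 1 = 1 := by
  have h := map_poly_of_map_denom_mul_U_mul_U (acFunctional_denom_mul_U_mul_U hc) 0
  rw [acFunctional_poly_succ_of_abs_lt_one hc hc1 1, Nat.cast_zero, poly_zero, if_pos rfl,
    mul_zero, zero_add, show (1 + C c : ℝ[X]) = (1 + c) • 1 by simp [smul_eq_C_mul],
    map_smul, smul_eq_mul] at h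
  exact (mul_eq_left₀ fun h0 ↦ hc (by linarith)).mp h

theorem acFunctional_one_of_abs_le_one (hc : c ≠ -1) (hc1 : |c| ≤ 1) :
    acFunctional hc 1 = 1 := by
  rcases hc1.lt_or_eq with hlt | heq
  · exact acFunctional_one_of_abs_lt_one hc hlt
  obtain rfl : c = 1 := ((abs_eq zero_le_one).mp heq).resolve_right hc
  have h : ∫ x in (-1 : ℝ)..1, √(1 - x ^ 2)⁻¹ = Real.pi := by
    simpa only [integral_measureT, T_zero, eval_one, one_mul] using
      integral_eval_T_real_measureT_zero
  simp only [acFunctional_apply, eval_one, one_mul, weight_one,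
    intervalIntegral.integral_const_mul, h]
  field_simp
  norm_num

theorem acFunctional_inv (hc : c ≠ -1) (hc' : c⁻¹ ≠ -1) (hc0 : c ≠ 0) (p : ℝ[X]) :
    acFunctional hc' p = c * acFunctional hc p := by
  have h : (1 + c⁻¹) * c ^ 2 = c * (1 + c) := by field_simp; ring
  simp only [acFunctional_apply, weight_inv hc0, mul_left_comm _ (c ^ 2),
    intervalIntegral.integral_const_mul]
  linear_combination
    2 / Real.pi * (∫ x in (-1 : ℝ)..1, p.eval x * weight c x) * h

theorem acFunctional_one_of_one_le_abs (hc : c ≠ -1) (hc1 : 1 ≤ |c|) :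
    acFunctional hc 1 = c⁻¹ := by
  have hc0 : c ≠ 0 := by rintro rfl; norm_num at hc1
  have hc' : c⁻¹ ≠ -1 := by rwa [Ne, inv_eq_iff_eq_inv, inv_neg_one]
  have h := acFunctional_one_of_abs_le_one hc' (by rw [abs_inv]; exact inv_le_one_of_one_le₀ hc1)
  rw [acFunctional_inv hc hc' hc0] at h
  exact eq_inv_of_mul_eq_one_right h

theorem isSpectral_acFunctional (hc : c ≠ -1) (hc1 : |c| ≤ 1) : IsSpectral c (acFunctional hc) :=
  ⟨acFunctional_one_of_abs_le_one hc hc1, acFunctional_X hc, acFunctional_denom_mul_U_mul_U hc⟩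

theorem isSpectral_acFunctional_add_atoms (hc : c ≠ -1) (hc1 : 1 ≤ c) :
    IsSpectral c (acFunctional hc + ((c - 1) / (2 * c)) •
      (leval ((1 + c) / (2 * √c)) + leval (-((1 + c) / (2 * √c))))) where
  map_one := by
    have hc0 : c ≠ 0 := by linarith
    simp only [LinearMap.add_apply, LinearMap.smul_apply, leval_apply, eval_one, smul_eq_mul,
      acFunctional_one_of_one_le_abs hc (hc1.trans (le_abs_self c))]
    field_simp
    ring
  map_X := by simp [acFunctional_X]
  map_denom_mul_U_mul_U n m := by
    have hroot : (denom c).eval ((1 + c) / (2 * √c)) = 0 := by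
      have hc0 : c ≠ 0 := by linarith
      rw [eval_denom, div_pow, mul_pow, Real.sq_sqrt (by linarith)]
      field_simp
      ring
    have hroot' : (denom c).eval (-((1 + c) / (2 * √c))) = 0 := by
      rwa [eval_denom, neg_sq, ← eval_denom]
    simp [acFunctional_denom_mul_U_mul_U, hroot, hroot']

end TotalMass

section GeneralizedChebyshev

/-- The generalized Chebyshev polynomials `Ch_n(·; a)` as elements of `K[X]`, expressed through
the Bernstein–Szegő polynomials instead of the recurrence defining `Ch`. -/
noncomputable def chPoly {K : Type*} [Field K] (a : K) : ℕ → K[X]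
  | 0 => 1
  | n + 1 => a⁻¹ • poly (a ^ 2 - 1) (n + 1 : ℕ)

theorem eval_chPoly {a : ℝ} (ha : a ≠ 0) (x : ℝ) (n : ℕ) : (chPoly a n).eval x = Ch a x n := by
  induction n using Nat.strong_induction_on with
  | _ n ih =>
    match n with
    | 0 => simp [chPoly, Ch]
    | 1 => simp [chPoly, Ch, poly_one, div_eq_inv_mul]
    | 2 =>
      simp only [chPoly, Ch, one_add_one_eq_two, Nat.cast_ofNat, poly_two, eval_smul, eval_sub,
        eval_add, eval_mul, eval_pow, eval_ofNat, eval_X, eval_one, eval_C, smul_eq_mul]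
      field_simp
      ring
    | n + 3 =>
      have h := poly_add_two (a ^ 2 - 1) (n + 1)
      rw [Ch, ← ih (n + 2) (by lia), ← ih (n + 1) (by lia), chPoly, chPoly, chPoly]
      push_cast
      rw [add_assoc (n : ℤ) 2 1, add_comm (2 : ℤ) 1, ← add_assoc, h]
      simp only [eval_smul, smul_eq_mul, eval_sub, eval_mul, eval_ofNat, eval_X, add_assoc,
        one_add_one_eq_two]
      ring

theorem IsSpectral.map_chPoly_mul_chPoly {K : Type*} [Field K] {a : K} (ha : a ≠ 0)
    {L : K[X] →ₗ[K] K} (hL : IsSpectral (a ^ 2 - 1) L) (n m : ℕ) :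
    L (chPoly a n * chPoly a m) = if n = m then 1 else 0 := by
  rcases n with _ | n <;> rcases m with _ | m
  · simp [chPoly, hL.map_one]
  · rw [chPoly, chPoly, one_mul, map_smul, hL.map_poly_succ, smul_zero, if_neg (by lia)]
  · rw [chPoly, chPoly, mul_one, map_smul, hL.map_poly_succ, smul_zero, if_neg (by lia)]
  · simp only [chPoly, smul_mul_smul_comm, map_smul, hL.map_poly_mul_poly, add_sub_cancel,
      smul_eq_mul, add_left_inj, mul_ite, mul_zero]
    congr 1
    field_simp

theorem sq_sub_one_ne_neg_one {a : ℝ} (ha : a ≠ 0) : a ^ 2 - 1 ≠ -1 := by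
  simp [ha]

theorem acFunctional_chPoly_mul_chPoly {a : ℝ} (ha : a ≠ 0) (n m : ℕ) :
    acFunctional (sq_sub_one_ne_neg_one ha) (chPoly a n * chPoly a m) = 2 * a ^ 2 / Real.pi *
      ∫ x in (-1 : ℝ)..1, Ch a x n * Ch a x m * √(1 - x ^ 2) /
        (a ^ 4 - 4 * (a ^ 2 - 1) * x ^ 2) := by
  simp only [acFunctional_apply, eval_mul, eval_chPoly ha, weight, eval_denom, add_sub_cancel,
    mul_div_assoc, ← pow_mul]

end GeneralizedChebyshev

end BernsteinSzego

/-- Orthogonality of the generalized Chebyshev polynomials with respect to the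
spectral measure of the Jacobi operator `H_a`:
`(2a²/π)·∫_{−1}^{1} Ch_n Ch_m √(1 − λ²)/(a⁴ − 4(a² − 1)λ²) dλ = δ_{n,m} − I_a(n,m)`,
where `I_a(n,m) = 0` for `a ≤ √2` and otherwise is the contribution of the two
atoms at `λ_± = ±a²/(2√(a² − 1))`, each of mass `(a² − 2)/(2(a² − 1))`. -/
theorem stmt8 (a : ℝ) (ha : 0 < a) (n m : ℕ) :
    2 * a ^ 2 / Real.pi *
        ∫ x in (-1 : ℝ)..1,
          Ch a x n * Ch a x m * Real.sqrt (1 - x ^ 2) /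
            (a ^ 4 - 4 * (a ^ 2 - 1) * x ^ 2) =
      (if n = m then (1 : ℝ) else 0) -
        (if a ≤ Real.sqrt 2 then (0 : ℝ)
          else (a ^ 2 - 2) / (2 * (a ^ 2 - 1)) *
            (Ch a (a ^ 2 / (2 * Real.sqrt (a ^ 2 - 1))) n *
                Ch a (a ^ 2 / (2 * Real.sqrt (a ^ 2 - 1))) m +
              Ch a (-(a ^ 2 / (2 * Real.sqrt (a ^ 2 - 1)))) n *
                Ch a (-(a ^ 2 / (2 * Real.sqrt (a ^ 2 - 1)))) m)) := by
  have hc := BernsteinSzego.sq_sub_one_ne_neg_one ha.ne'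
  have h_ac := BernsteinSzego.acFunctional_chPoly_mul_chPoly ha.ne' n m
  rcases le_or_gt a √2 with h_le | h_gt
  · have h_abs : |a ^ 2 - 1| ≤ 1 := by
      have := (Real.le_sqrt ha.le zero_le_two).mp h_le
      exact abs_le.mpr ⟨by linarith [sq_nonneg a], by linarith⟩
    rw [if_pos h_le, sub_zero, ← h_ac]
    exact (BernsteinSzego.isSpectral_acFunctional hc h_abs).map_chPoly_mul_chPoly ha.ne' n m
  · have h_one_le : 1 ≤ a ^ 2 - 1 := by linarith [(Real.sqrt_lt' ha).mp h_gt]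
    have h := (BernsteinSzego.isSpectral_acFunctional_add_atoms hc h_one_le).map_chPoly_mul_chPoly
      ha.ne' n m
    simp only [LinearMap.add_apply, LinearMap.smul_apply, leval_apply, eval_mul, smul_eq_mul,
      BernsteinSzego.eval_chPoly ha.ne', add_sub_cancel, sub_sub, one_add_one_eq_two] at h
    rw [if_neg h_gt.not_ge, ← h_ac]
    exact eq_sub_of_add_eq h
end

section
/- Let a ∈ (0, √2] and for n ∈ ℕ set κ_n(a) = (2a²/π)·∫_{−1}^{1} λ^n·√(1 − λ²)/(a⁴ − 4(a² − 1)λ²) dλ. Then for every real ζ with |ζ| < 1, the series Σ_{n=0}^{∞} κ_n(a)·ζ^n converges and equals 2/(a²·√(1 − ζ²) + 2 − a²). -/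
/-!
Summing the geometric series under the integral and substituting `λ = cos θ` turns the generating
function into an integral over `[0, π]` against `1 / (1 - ζ cos θ)`, of which only the part
`1 / (1 - ζ² cos² θ)` invariant under `θ ↦ π - θ` contributes. Both this kernel and the density are
reciprocals of quadratic forms `sin² θ + r² cos² θ`, the kernel with `r = t = √(1 - ζ²)` and, up to
the factor `a⁴`, the density with `r = s = |2 - a²| / a²`. The closed form is thus the identity
`∫ sin² θ / ((sin² θ + s² cos² θ) (sin² θ + t² cos² θ)) dθ = π / (s + t)`, which for `s ≠ t`
partial fractions reduce to `∫ (sin² θ + t² cos² θ)⁻¹ dθ = π / t`.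
-/

open MeasureTheory Set
open scoped Real

section Moments

variable {α 𝕜 : Type*} [MeasurableSpace α] {μ : Measure α} [RCLike 𝕜] {f w : α → 𝕜}

theorem hasSum_integral_pow_mul_mul_pow (hf : AEStronglyMeasurable f μ)
    (hf_le : ∀ᵐ x ∂μ, ‖f x‖ ≤ 1) (hw : Integrable w μ) {ζ : 𝕜} (hζ : ‖ζ‖ < 1) :
    HasSum (fun n : ℕ => (∫ x, f x ^ n * w x ∂μ) * ζ ^ n) (∫ x, w x * (1 - ζ * f x)⁻¹ ∂μ) := by
  have hseries : HasSum (fun n : ℕ => ∫ x, w x * (ζ * f x) ^ n ∂μ)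
      (∫ x, w x * (1 - ζ * f x)⁻¹ ∂μ) := by
    refine hasSum_integral_of_dominated_convergence (fun n x => ‖w x‖ * ‖ζ‖ ^ n)
      (fun n => hw.1.mul ((hf.const_mul ζ).pow n)) (fun n => ?_) ?_ ?_ ?_
    · filter_upwards [hf_le] with x hx
      rw [norm_mul, norm_pow, norm_mul]
      gcongr
      exact mul_le_of_le_one_right (norm_nonneg ζ) hx
    · exact .of_forall fun x => (summable_geometric_of_lt_one (norm_nonneg ζ) hζ).mul_left _
    · simp only [tsum_mul_left]
      exact hw.norm.mul_const _
    · filter_upwards [hf_le] with x hx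
      have hζx : ‖ζ * f x‖ < 1 := by
        rw [norm_mul]
        exact mul_lt_one_of_nonneg_of_lt_one_left (norm_nonneg ζ) hζ hx
      exact (hasSum_geometric_of_norm_lt_one hζx).mul_left (w x)
  refine hseries.congr_fun fun n => ?_
  rw [← integral_mul_const]
  congr 1 with x
  ring

end Moments

theorem intervalIntegral_eq_zero_of_reflect_eq_neg {E : Type*} [NormedAddCommGroup E]
    [NormedSpace ℝ E] {f : ℝ → E} {a b : ℝ} (hf : ∀ x, f (a + b - x) = -f x) :
    ∫ x in a..b, f x = 0 := by
  have : IsAddTorsionFree E := .of_isTorsionFree ℝ E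
  rw [← self_eq_neg, ← intervalIntegral.integral_neg]
  simp only [← hf, intervalIntegral.integral_comp_sub_left, add_sub_cancel_left,
    add_sub_cancel_right]

theorem integral_mul_sqrt_one_sub_sq (f : ℝ → ℝ) :
    ∫ x in (-1)..1, f x * √(1 - x ^ 2) = ∫ θ in 0..π, f (Real.cos θ) * Real.sin θ ^ 2 := by
  have hsqrt (y : ℝ) : y * √y⁻¹ = √y := by rw [Real.sqrt_inv, ← div_eq_mul_inv, Real.div_sqrt]
  simp only [Real.sin_sq, ← Polynomial.Chebyshev.integral_measureT_eq_integral_cos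
    (f := fun x => f x * (1 - x ^ 2)), Polynomial.Chebyshev.integral_measureT, mul_assoc, hsqrt]

section EvenKernel

open Real

theorem one_sub_mul_cos_pos {ζ : ℝ} (hζ : |ζ| < 1) (θ : ℝ) : 0 < 1 - ζ * cos θ := by
  have h : |ζ * cos θ| < 1 := by
    rw [abs_mul]
    exact mul_lt_one_of_nonneg_of_lt_one_left (abs_nonneg ζ) hζ (abs_cos_le_one θ)
  exact sub_pos.2 (abs_lt.1 h).2

theorem integral_mul_inv_one_sub_mul_cos {w : ℝ → ℝ} (hw : ∀ θ, w (π - θ) = w θ)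
    (hint : IntervalIntegrable w volume 0 π) {ζ : ℝ} (hζ : |ζ| < 1) :
    ∫ θ in 0..π, w θ * (1 - ζ * cos θ)⁻¹ = ∫ θ in 0..π, w θ * (1 - ζ ^ 2 * cos θ ^ 2)⁻¹ := by
  have hfactor (θ : ℝ) : 1 - ζ ^ 2 * cos θ ^ 2 = (1 - ζ * cos θ) * (1 + ζ * cos θ) := by ring
  have hminus (θ : ℝ) : 0 < 1 - ζ * cos θ := one_sub_mul_cos_pos hζ θ
  have hplus (θ : ℝ) : 0 < 1 + ζ * cos θ := by
    simpa using one_sub_mul_cos_pos ((abs_neg ζ).trans_lt hζ) θ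
  have hpos (θ : ℝ) : 0 < 1 - ζ ^ 2 * cos θ ^ 2 := hfactor θ ▸ mul_pos (hminus θ) (hplus θ)
  have heven : IntervalIntegrable (fun θ => w θ * (1 - ζ ^ 2 * cos θ ^ 2)⁻¹) volume 0 π :=
    hint.mul_continuousOn
      (Continuous.inv₀ (by fun_prop) fun θ => (hpos θ).ne').continuousOn
  have hodd : ∫ θ in 0..π, w θ * (1 - ζ ^ 2 * cos θ ^ 2)⁻¹ * (ζ * cos θ) = 0 :=
    intervalIntegral_eq_zero_of_reflect_eq_neg fun θ => by
      rw [zero_add, hw, cos_pi_sub]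
      ring
  calc ∫ θ in 0..π, w θ * (1 - ζ * cos θ)⁻¹
      = ∫ θ in 0..π, (w θ * (1 - ζ ^ 2 * cos θ ^ 2)⁻¹ +
          w θ * (1 - ζ ^ 2 * cos θ ^ 2)⁻¹ * (ζ * cos θ)) := by
        congr 1 with θ
        have h₁ := (hminus θ).ne'
        have h₂ := (hplus θ).ne'
        rw [hfactor]
        field_simp
    _ = ∫ θ in 0..π, w θ * (1 - ζ ^ 2 * cos θ ^ 2)⁻¹ := by
        rw [intervalIntegral.integral_add heven (heven.mul_continuousOn (by fun_prop)), hodd,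
          add_zero]

end EvenKernel

section TrigonometricIntegrals

open Real

variable {s t : ℝ}

theorem sin_sq_add_sq_mul_cos_sq_pos (ht : t ≠ 0) (θ : ℝ) :
    0 < sin θ ^ 2 + t ^ 2 * cos θ ^ 2 := by
  rcases eq_or_ne (cos θ) 0 with h | h
  · have : sin θ ^ 2 = 1 := by simpa [h] using sin_sq θ
    rw [h, this]
    norm_num
  · positivity

theorem continuous_inv_sin_sq_add_sq_mul_cos_sq (ht : t ≠ 0) :
    Continuous fun θ => (sin θ ^ 2 + t ^ 2 * cos θ ^ 2)⁻¹ :=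
  Continuous.inv₀ (by fun_prop) fun θ => (sin_sq_add_sq_mul_cos_sq_pos ht θ).ne'

theorem hasDerivAt_arctan_div {f g : ℝ → ℝ} {f' g' x : ℝ} (hf : HasDerivAt f f' x)
    (hg : HasDerivAt g g' x) (hgx : g x ≠ 0) :
    HasDerivAt (fun x => arctan (f x / g x)) ((f' * g x - f x * g') / (g x ^ 2 + f x ^ 2)) x := by
  refine (hf.div hg hgx).arctan.congr_deriv ?_
  simp only [Pi.div_apply]
  field_simp

theorem hasDerivAt_sin_sq_add_mul_cos_sq (c θ : ℝ) :
    HasDerivAt (fun θ => sin θ ^ 2 + c * cos θ ^ 2) (2 * (1 - c) * (sin θ * cos θ)) θ := by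
  refine (((hasDerivAt_sin θ).fun_pow 2).add
    (((hasDerivAt_cos θ).fun_pow 2).const_mul c)).congr_deriv ?_
  push_cast
  ring

theorem hasDerivAt_sin_mul_cos (θ : ℝ) :
    HasDerivAt (fun θ => sin θ * cos θ) (cos θ ^ 2 - sin θ ^ 2) θ :=
  ((hasDerivAt_sin θ).mul (hasDerivAt_cos θ)).congr_deriv (by ring)

-- By the addition formula for `arctan` this primitive is `π / 2 - arctan (t * cot θ)` on `(0, π)`,
-- written so that it is smooth on all of `ℝ`.
theorem hasDerivAt_add_arctan_div (ht : 0 < t) (θ : ℝ) :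
    HasDerivAt (fun θ => θ + arctan ((1 - t) * (sin θ * cos θ) / (sin θ ^ 2 + t * cos θ ^ 2)))
      (t * (sin θ ^ 2 + t ^ 2 * cos θ ^ 2)⁻¹) θ := by
  have hq : 0 < sin θ ^ 2 + t * cos θ ^ 2 := by
    simpa only [sq_sqrt ht.le] using sin_sq_add_sq_mul_cos_sq_pos (sqrt_ne_zero'.2 ht) θ
  have hD := (sin_sq_add_sq_mul_cos_sq_pos ht.ne' θ).ne'
  have hnormSq : (sin θ ^ 2 + t * cos θ ^ 2) ^ 2 + ((1 - t) * (sin θ * cos θ)) ^ 2 =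
      sin θ ^ 2 + t ^ 2 * cos θ ^ 2 := by
    linear_combination (sin θ ^ 2 + t ^ 2 * cos θ ^ 2) * sin_sq_add_cos_sq θ
  refine ((hasDerivAt_id' θ).add (hasDerivAt_arctan_div ((hasDerivAt_sin_mul_cos θ).const_mul
    (1 - t)) (hasDerivAt_sin_sq_add_mul_cos_sq t θ) hq.ne')).congr_deriv ?_
  rw [hnormSq]
  field_simp
  linear_combination
    ((1 - t) * (t * cos θ ^ 2 - sin θ ^ 2) + t) * sin_sq_add_cos_sq θ

theorem integral_inv_sin_sq_add_sq_mul_cos_sq (ht : 0 < t) :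
    ∫ θ in 0..π, (sin θ ^ 2 + t ^ 2 * cos θ ^ 2)⁻¹ = π / t := by
  have h : ∫ θ in 0..π, t * (sin θ ^ 2 + t ^ 2 * cos θ ^ 2)⁻¹ = π := by
    rw [intervalIntegral.integral_eq_sub_of_hasDerivAt (fun θ _ => hasDerivAt_add_arctan_div ht θ)
      (((continuous_inv_sin_sq_add_sq_mul_cos_sq ht.ne').const_mul t).intervalIntegrable _ _)]
    simp
  rwa [intervalIntegral.integral_const_mul, mul_comm, ← eq_div_iff ht.ne'] at h

theorem hasDerivAt_sin_mul_cos_div (ht : t ≠ 0) (θ : ℝ) :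
    HasDerivAt (fun θ => sin θ * cos θ / (sin θ ^ 2 + t ^ 2 * cos θ ^ 2))
      ((sin θ ^ 2 + t ^ 2 * cos θ ^ 2)⁻¹ -
        2 * (sin θ ^ 2 / (sin θ ^ 2 + t ^ 2 * cos θ ^ 2) ^ 2)) θ := by
  have hD := (sin_sq_add_sq_mul_cos_sq_pos ht θ).ne'
  have hnum : (cos θ ^ 2 - sin θ ^ 2) * (sin θ ^ 2 + t ^ 2 * cos θ ^ 2) -
      sin θ * cos θ * (2 * (1 - t ^ 2) * (sin θ * cos θ)) =
        sin θ ^ 2 + t ^ 2 * cos θ ^ 2 - 2 * sin θ ^ 2 := by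
    linear_combination (t ^ 2 * cos θ ^ 2 - sin θ ^ 2) * sin_sq_add_cos_sq θ
  refine ((hasDerivAt_sin_mul_cos θ).div
    (hasDerivAt_sin_sq_add_mul_cos_sq (t ^ 2) θ) hD).congr_deriv ?_
  rw [hnum]
  generalize sin θ ^ 2 + t ^ 2 * cos θ ^ 2 = D at hD ⊢
  field_simp

theorem integral_sin_sq_div_sq (ht : 0 < t) :
    ∫ θ in 0..π, sin θ ^ 2 / (sin θ ^ 2 + t ^ 2 * cos θ ^ 2) ^ 2 = π / (t + t) := by
  have hinv : IntervalIntegrable (fun θ => (sin θ ^ 2 + t ^ 2 * cos θ ^ 2)⁻¹) volume 0 π :=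
    (continuous_inv_sin_sq_add_sq_mul_cos_sq ht.ne').intervalIntegrable 0 π
  have hsq : IntervalIntegrable
      (fun θ => 2 * (sin θ ^ 2 / (sin θ ^ 2 + t ^ 2 * cos θ ^ 2) ^ 2)) volume 0 π :=
    (Continuous.const_mul (Continuous.div (by fun_prop) (by fun_prop) fun θ =>
      (pow_pos (sin_sq_add_sq_mul_cos_sq_pos ht.ne' θ) 2).ne') 2).intervalIntegrable 0 π
  have h := intervalIntegral.integral_eq_sub_of_hasDerivAt
    (fun θ _ => hasDerivAt_sin_mul_cos_div ht.ne' θ) (hinv.sub hsq)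
  rw [intervalIntegral.integral_sub hinv hsq, intervalIntegral.integral_const_mul,
    integral_inv_sin_sq_add_sq_mul_cos_sq ht, sin_pi, sin_zero] at h
  simp only [zero_mul, zero_div, sub_zero] at h
  rw [← two_mul, mul_comm, ← div_div]
  linarith

-- Partial fractions, which degenerate at `s = t`.
theorem integral_sin_sq_div_mul_of_ne (hs : 0 < s) (ht : 0 < t) (hst : s ≠ t) :
    ∫ θ in 0..π, sin θ ^ 2 / ((sin θ ^ 2 + s ^ 2 * cos θ ^ 2) *
      (sin θ ^ 2 + t ^ 2 * cos θ ^ 2)) = π / (s + t) := by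
  have hsub : s - t ≠ 0 := sub_ne_zero.2 hst
  have hsq : s ^ 2 - t ^ 2 ≠ 0 := sq_sub_sq s t ▸ mul_ne_zero (by positivity) hsub
  have hinv {r : ℝ} (hr : 0 < r) : IntervalIntegrable
      (fun θ => r ^ 2 * (sin θ ^ 2 + r ^ 2 * cos θ ^ 2)⁻¹) volume 0 π :=
    ((continuous_inv_sin_sq_add_sq_mul_cos_sq hr.ne').const_mul (r ^ 2)).intervalIntegrable 0 π
  have hpartial (θ : ℝ) : sin θ ^ 2 / ((sin θ ^ 2 + s ^ 2 * cos θ ^ 2) *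
      (sin θ ^ 2 + t ^ 2 * cos θ ^ 2)) = (s ^ 2 * (sin θ ^ 2 + s ^ 2 * cos θ ^ 2)⁻¹ -
        t ^ 2 * (sin θ ^ 2 + t ^ 2 * cos θ ^ 2)⁻¹) / (s ^ 2 - t ^ 2) := by
    have hDs := (sin_sq_add_sq_mul_cos_sq_pos hs.ne' θ).ne'
    have hDt := (sin_sq_add_sq_mul_cos_sq_pos ht.ne' θ).ne'
    have hdiff : s ^ 2 * (sin θ ^ 2 + t ^ 2 * cos θ ^ 2) -
        t ^ 2 * (sin θ ^ 2 + s ^ 2 * cos θ ^ 2) = (s ^ 2 - t ^ 2) * sin θ ^ 2 := by ring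
    generalize sin θ ^ 2 + s ^ 2 * cos θ ^ 2 = Ds, sin θ ^ 2 + t ^ 2 * cos θ ^ 2 = Dt
      at hDs hDt hdiff ⊢
    field_simp
    linear_combination -hdiff
  simp only [hpartial]
  rw [intervalIntegral.integral_div, intervalIntegral.integral_sub (hinv hs) (hinv ht),
    intervalIntegral.integral_const_mul, intervalIntegral.integral_const_mul,
    integral_inv_sin_sq_add_sq_mul_cos_sq hs, integral_inv_sin_sq_add_sq_mul_cos_sq ht]
  field_simp
  ring

theorem integral_sin_sq_div_mul (hs : 0 ≤ s) (ht : 0 < t) :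
    ∫ θ in 0..π, sin θ ^ 2 / ((sin θ ^ 2 + s ^ 2 * cos θ ^ 2) *
      (sin θ ^ 2 + t ^ 2 * cos θ ^ 2)) = π / (s + t) := by
  rcases hs.eq_or_lt with rfl | hs
  · rw [zero_add, ← integral_inv_sin_sq_add_sq_mul_cos_sq ht]
    refine intervalIntegral.integral_congr_Ioo_of_le pi_pos.le fun θ hθ => ?_
    have hsin : sin θ ≠ 0 := (sin_pos_of_mem_Ioo hθ).ne'
    simp [hsin, div_mul_eq_div_div]
  · rcases eq_or_ne s t with rfl | hst
    · simpa only [sq] using integral_sin_sq_div_sq ht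
    · exact integral_sin_sq_div_mul_of_ne hs ht hst

end TrigonometricIntegrals

section GeneratingFunction

open Real

theorem intervalIntegrable_sin_sq_div (s a b : ℝ) :
    IntervalIntegrable (fun θ => sin θ ^ 2 / (sin θ ^ 2 + s ^ 2 * cos θ ^ 2)) volume a b := by
  refine (intervalIntegrable_const (c := (1 : ℝ))).mono_fun'
    (by fun_prop : Measurable _).aestronglyMeasurable (.of_forall fun θ => ?_)
  have hcos : 0 ≤ s ^ 2 * cos θ ^ 2 := by positivity
  beta_reduce
  rw [norm_of_nonneg (by positivity)]
  exact div_le_one_of_le₀ (le_add_of_nonneg_right hcos) (by positivity)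

theorem integral_sin_sq_div_mul_inv_one_sub_mul_cos {s ζ : ℝ} (hs : 0 ≤ s) (hζ : |ζ| < 1) :
    ∫ θ in 0..π, sin θ ^ 2 / (sin θ ^ 2 + s ^ 2 * cos θ ^ 2) * (1 - ζ * cos θ)⁻¹ =
      π / (s + √(1 - ζ ^ 2)) := by
  have hζ2 : 0 < 1 - ζ ^ 2 := sub_pos.2 ((sq_lt_one_iff_abs_lt_one ζ).2 hζ)
  have hkernel (θ : ℝ) : 1 - ζ ^ 2 * cos θ ^ 2 = sin θ ^ 2 + √(1 - ζ ^ 2) ^ 2 * cos θ ^ 2 := by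
    rw [sq_sqrt hζ2.le, sin_sq]
    ring
  rw [integral_mul_inv_one_sub_mul_cos (fun θ => by simp) (intervalIntegrable_sin_sq_div s 0 π) hζ,
    ← integral_sin_sq_div_mul hs (sqrt_pos.2 hζ2)]
  simp only [hkernel, ← div_eq_mul_inv, div_div]

theorem hasSum_integral_cos_pow_mul_sin_sq_div {s ζ : ℝ} (hs : 0 ≤ s) (hζ : |ζ| < 1) :
    HasSum (fun n : ℕ => (∫ θ in 0..π, cos θ ^ n *
        (sin θ ^ 2 / (sin θ ^ 2 + s ^ 2 * cos θ ^ 2))) * ζ ^ n) (π / (s + √(1 - ζ ^ 2))) := by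
  rw [← integral_sin_sq_div_mul_inv_one_sub_mul_cos hs hζ]
  simp only [intervalIntegral.integral_of_le pi_pos.le]
  exact hasSum_integral_pow_mul_mul_pow continuous_cos.aestronglyMeasurable
    (.of_forall abs_cos_le_one) (intervalIntegrable_sin_sq_div s 0 π).1 hζ

theorem integral_pow_mul_sqrt_div_eq_integral_cos {a : ℝ} (ha : a ≠ 0) (n : ℕ) :
    ∫ x in (-1)..1, x ^ n * √(1 - x ^ 2) / (a ^ 4 - 4 * (a ^ 2 - 1) * x ^ 2) =
      (∫ θ in 0..π, cos θ ^ n *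
        (sin θ ^ 2 / (sin θ ^ 2 + (|2 - a ^ 2| / a ^ 2) ^ 2 * cos θ ^ 2))) / a ^ 4 := by
  have hden (θ : ℝ) : a ^ 4 - 4 * (a ^ 2 - 1) * cos θ ^ 2 =
      (sin θ ^ 2 + (|2 - a ^ 2| / a ^ 2) ^ 2 * cos θ ^ 2) * a ^ 4 := by
    rw [div_pow, sq_abs, sin_sq]
    field_simp
    ring
  simp only [mul_div_right_comm, integral_mul_sqrt_one_sub_sq
    fun x => x ^ n / (a ^ 4 - 4 * (a ^ 2 - 1) * x ^ 2)]
  rw [← intervalIntegral.integral_div]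
  congr 1 with θ
  rw [hden, div_mul_eq_mul_div, mul_div_assoc', div_div]

end GeneratingFunction

theorem stmt15_general (a : ℝ) (ha : a ≠ 0) (ζ : ℝ) (hζ : |ζ| < 1) :
    let κ : ℕ → ℝ := fun n =>
      2 * a ^ 2 / Real.pi *
        ∫ x in (-1 : ℝ)..1,
          x ^ n * Real.sqrt (1 - x ^ 2) / (a ^ 4 - 4 * (a ^ 2 - 1) * x ^ 2)
    HasSum (fun n : ℕ => κ n * ζ ^ n)
      (2 / (a ^ 2 * Real.sqrt (1 - ζ ^ 2) + |2 - a ^ 2|)) := by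
  intro κ
  have hs : 0 ≤ |2 - a ^ 2| / a ^ 2 := by positivity
  have hvalue : 2 / (a ^ 2 * √(1 - ζ ^ 2) + |2 - a ^ 2|) =
      2 / (a ^ 2 * π) * (π / (|2 - a ^ 2| / a ^ 2 + √(1 - ζ ^ 2))) := by
    field_simp
    ring
  rw [hvalue]
  refine ((hasSum_integral_cos_pow_mul_sin_sq_div hs hζ).mul_left _).congr_fun fun n => ?_
  simp only [κ, integral_pow_mul_sqrt_div_eq_integral_cos ha]
  field_simp

/-- Generating function of the moments `κ_n(a)` of the spectral measure of `H_a` for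
`a ∈ (0, √2]`: for `|ζ| < 1`, `Σ κ_n(a) ζ^n = 2/(a²√(1 − ζ²) + 2 − a²)`. -/
theorem stmt15 (a : ℝ) (ha : a ∈ Set.Ioc 0 (Real.sqrt 2)) (ζ : ℝ) (hζ : |ζ| < 1) :
    let κ : ℕ → ℝ := fun n =>
      2 * a ^ 2 / Real.pi *
        ∫ x in (-1 : ℝ)..1,
          x ^ n * Real.sqrt (1 - x ^ 2) / (a ^ 4 - 4 * (a ^ 2 - 1) * x ^ 2)
    HasSum (fun n : ℕ => κ n * ζ ^ n)
      (2 / (a ^ 2 * Real.sqrt (1 - ζ ^ 2) + 2 - a ^ 2)) := by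
  have ha2 : 0 ≤ 2 - a ^ 2 := sub_nonneg.2 ((Real.le_sqrt' ha.1).1 ha.2)
  simpa only [abs_of_nonneg ha2, add_sub_assoc] using stmt15_general a ha.1.ne' ζ hζ
end
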